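/- Let N ≥ 3, r > 0 and x ∈ ℝ^N with |x| ≠ r. Then (1/(σ_N r^{N−1})) ∫_{∂B_r(0)} |x − y|^{2−N} dσ(y) equals |x|^{2−N} if |x| > r, and equals r^{2−N} if |x| < r. -/

import Mathlib

open Metric Set MeasureTheory Filter

/-!
Inside the sphere, the potential of a rotation-invariant measure carried by the sphere is harmonic
and radial. By the maximum principle on the ball of radius `‖x‖`, a radial harmonic function is
constant, hence equal to its value at the center. The exterior values follow by inversion in the
sphere: `x ↦ x* = (r / ‖x‖)² x` satisfies `‖x* - y‖ = (r / ‖x‖) ‖x - y‖` for all `y` on the sphere,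
so it only multiplies the potential by a power of `r / ‖x‖`.
-/

open Module InnerProductSpace Laplacian
open scoped Topology ContDiff

section ParametricIntegral

variable {Y F : Type*} [TopologicalSpace Y] [NormedAddCommGroup F] {K : Set Y}

theorem exists_nhds_bound_of_isCompact {X : Type*} [TopologicalSpace X] [LocallyCompactSpace X]
    {U : Set X} {f : X → Y → F} (hU : IsOpen U)
    (hf : ContinuousOn (Function.uncurry f) (U ×ˢ K)) (hK : IsCompact K) {x : X} (hx : x ∈ U) :
    ∃ s ∈ 𝓝 x, s ⊆ U ∧ ∃ C, ∀ z ∈ s, ∀ y ∈ K, ‖f z y‖ ≤ C := by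
  obtain ⟨s, hs, hxs, hsU⟩ := exists_compact_subset hU hx
  obtain ⟨C, hC⟩ := (hs.prod hK).exists_bound_of_continuousOn
    (hf.mono (prod_mono hsU Subset.rfl))
  exact ⟨s, mem_interior_iff_mem_nhds.1 hxs, hsU, C, fun z hz y hy => hC (z, y) ⟨hz, hy⟩⟩

variable [T2Space Y] [MeasurableSpace Y] [BorelSpace Y] {μ : Measure Y} [IsFiniteMeasure μ]

theorem integrable_of_continuousOn_of_ae_mem_isCompact {g : Y → F} (hg : ContinuousOn g K)
    (hK : IsCompact K) (hμ : ∀ᵐ y ∂μ, y ∈ K) : Integrable g μ := by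
  rw [← Measure.restrict_eq_self_of_ae_mem hμ]
  exact hg.integrableOn_of_subset_isCompact hK hK.measurableSet Subset.rfl (measure_ne_top μ K)

theorem continuousOn_integral_of_ae_mem_isCompact [NormedSpace ℝ F] {X : Type*} [TopologicalSpace X]
    [LocallyCompactSpace X] [FirstCountableTopology X] {U : Set X} {f : X → Y → F} (hU : IsOpen U)
    (hf : ContinuousOn (Function.uncurry f) (U ×ˢ K)) (hK : IsCompact K) (hμ : ∀ᵐ y ∂μ, y ∈ K) :
    ContinuousOn (fun x => ∫ y, f x y ∂μ) U := by
  intro x hx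
  obtain ⟨s, hs, hsU, C, hC⟩ := exists_nhds_bound_of_isCompact hU hf hK hx
  refine (continuousAt_of_dominated (bound := fun _ => C) ?_ ?_ (integrable_const C)
    ?_).continuousWithinAt
  · filter_upwards [hs] with z hz
    exact (integrable_of_continuousOn_of_ae_mem_isCompact (hf.uncurry_left z (hsU hz)) hK
      hμ).aestronglyMeasurable
  · filter_upwards [hs] with z hz
    filter_upwards [hμ] with y hy using hC z hz y hy
  · filter_upwards [hμ] with y hy
    exact (hf.uncurry_right y hy).continuousAt (hU.mem_nhds hx)

theorem hasFDerivAt_integral_of_ae_mem_isCompact {𝕜 E : Type*} [RCLike 𝕜] [NormedAddCommGroup E]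
    [NormedSpace 𝕜 E] [LocallyCompactSpace E] [NormedSpace ℝ F] [NormedSpace 𝕜 F]
    {U : Set E} {f : E → Y → F} {f' : E → Y → E →L[𝕜] F} (hU : IsOpen U)
    (hf : ∀ x ∈ U, ContinuousOn (f x) K)
    (hf' : ContinuousOn (Function.uncurry f') (U ×ˢ K))
    (hderiv : ∀ x ∈ U, ∀ y ∈ K, HasFDerivAt (fun z => f z y) (f' x y) x)
    (hK : IsCompact K) (hμ : ∀ᵐ y ∂μ, y ∈ K) {x : E} (hx : x ∈ U) :
    HasFDerivAt (fun z => ∫ y, f z y ∂μ) (∫ y, f' x y ∂μ) x := by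
  obtain ⟨s, hs, hsU, C, hC⟩ := exists_nhds_bound_of_isCompact hU hf' hK hx
  refine hasFDerivAt_integral_of_dominated_of_fderiv_le hs (bound := fun _ => C) ?_
    (integrable_of_continuousOn_of_ae_mem_isCompact (hf x hx) hK hμ)
    (integrable_of_continuousOn_of_ae_mem_isCompact (hf'.uncurry_left x hx) hK
      hμ).aestronglyMeasurable ?_
    (integrable_const C) ?_
  · filter_upwards [hU.mem_nhds hx] with z hz
    exact (integrable_of_continuousOn_of_ae_mem_isCompact (hf z hz) hK hμ).aestronglyMeasurable
  · filter_upwards [hμ] with y hy z hz using hC z hz y hy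
  · filter_upwards [hμ] with y hy z hz using hderiv z (hsU hz) y hy

end ParametricIntegral

section ConvolutionKernel

variable {E F : Type*} [NormedAddCommGroup E] [NormedSpace ℝ E] [LocallyCompactSpace E]
  [MeasurableSpace E] [BorelSpace E] [NormedAddCommGroup F] [NormedSpace ℝ F] {ν : Measure E}
  [IsFiniteMeasure ν] {K U V : Set E} {k : E → F}

theorem hasFDerivAt_integral_comp_sub (hV : IsOpen V) (hk : ContDiffOn ℝ 1 k V)
    (hU : IsOpen U) (hUV : ∀ x ∈ U, ∀ y ∈ K, x - y ∈ V) (hK : IsCompact K)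
    (hν : ∀ᵐ y ∂ν, y ∈ K) {x : E} (hx : x ∈ U) :
    HasFDerivAt (fun z => ∫ y, k (z - y) ∂ν) (∫ y, fderiv ℝ k (x - y) ∂ν) x := by
  have hmaps : MapsTo (fun p : E × E => p.1 - p.2) (U ×ˢ K) V := fun p hp => hUV _ hp.1 _ hp.2
  have hk' : ContinuousOn (fderiv ℝ k) V := hk.continuousOn_fderiv_of_isOpen hV le_rfl
  refine hasFDerivAt_integral_of_ae_mem_isCompact (f := fun z y => k (z - y))
    (f' := fun z y => fderiv ℝ k (z - y)) hU
    (fun z hz => hk.continuousOn.comp (by fun_prop) (hUV z hz))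
    (hk'.comp (by fun_prop) hmaps) (fun z hz y hy => ?_) hK hν hx
  have hdiff : DifferentiableAt ℝ k (z - y) :=
    (hk.contDiffAt (hV.mem_nhds (hUV z hz y hy))).differentiableAt one_ne_zero
  exact (hasFDerivAt_comp_sub y).2 hdiff.hasFDerivAt

theorem contDiffOn_one_integral_comp_sub (hV : IsOpen V) (hk : ContDiffOn ℝ 1 k V)
    (hU : IsOpen U) (hUV : ∀ x ∈ U, ∀ y ∈ K, x - y ∈ V) (hK : IsCompact K)
    (hν : ∀ᵐ y ∂ν, y ∈ K) : ContDiffOn ℝ 1 (fun x => ∫ y, k (x - y) ∂ν) U := by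
  have hderiv : ∀ x ∈ U, HasFDerivAt (fun z => ∫ y, k (z - y) ∂ν) _ x := fun x hx =>
    hasFDerivAt_integral_comp_sub hV hk hU hUV hK hν hx
  have hmaps : MapsTo (fun p : E × E => p.1 - p.2) (U ×ˢ K) V := fun p hp => hUV _ hp.1 _ hp.2
  have hcont : ContinuousOn (fun x => ∫ y, fderiv ℝ k (x - y) ∂ν) U :=
    continuousOn_integral_of_ae_mem_isCompact hU
      ((hk.continuousOn_fderiv_of_isOpen hV le_rfl).comp (by fun_prop) hmaps) hK hν
  rw [← zero_add (1 : ℕ∞ω), contDiffOn_succ_iff_fderiv_of_isOpen hU, contDiffOn_zero]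
  exact ⟨fun x hx => (hderiv x hx).differentiableAt.differentiableWithinAt, by simp,
    hcont.congr fun x hx => (hderiv x hx).fderiv⟩

theorem contDiffOn_two_integral_comp_sub (hV : IsOpen V) (hk : ContDiffOn ℝ 2 k V)
    (hU : IsOpen U) (hUV : ∀ x ∈ U, ∀ y ∈ K, x - y ∈ V) (hK : IsCompact K)
    (hν : ∀ᵐ y ∂ν, y ∈ K) : ContDiffOn ℝ 2 (fun x => ∫ y, k (x - y) ∂ν) U := by
  have hderiv : ∀ x ∈ U, HasFDerivAt (fun z => ∫ y, k (z - y) ∂ν) _ x := fun x hx =>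
    hasFDerivAt_integral_comp_sub hV (hk.of_le one_le_two) hU hUV hK hν hx
  have hk' : ContDiffOn ℝ 1 (fderiv ℝ k) V := hk.fderiv_of_isOpen hV (by norm_num)
  rw [← one_add_one_eq_two, contDiffOn_succ_iff_fderiv_of_isOpen hU]
  exact ⟨fun x hx => (hderiv x hx).differentiableAt.differentiableWithinAt, by simp,
    (contDiffOn_one_integral_comp_sub hV hk' hU hUV hK hν).congr fun x hx => (hderiv x hx).fderiv⟩

end ConvolutionKernel

theorem deriv_deriv_nonpos_of_isLocalMax {f : ℝ → ℝ} {a : ℝ} (h : IsLocalMax f a)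
    (hc : ContinuousAt f a) : deriv (deriv f) a ≤ 0 := by
  by_contra! hpos
  have hmin := isLocalMin_of_deriv_deriv_pos hpos h.deriv_eq_zero hc
  have hconst : f =ᶠ[𝓝 a] fun _ => f a := by
    filter_upwards [h, hmin] with t h₁ h₂ using le_antisymm h₁ h₂
  refine hpos.ne' ?_
  simpa only [deriv_const', deriv_const] using hconst.deriv.deriv_eq

theorem deriv_deriv_comp_add_smul {𝕜 E F : Type*} [NontriviallyNormedField 𝕜]
    [NormedAddCommGroup E] [NormedSpace 𝕜 E] [NormedAddCommGroup F] [NormedSpace 𝕜 F]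
    {f : E → F} {x : E} (hf : ContDiffAt 𝕜 2 f x) (v : E) :
    deriv (deriv fun t : 𝕜 => f (x + t • v)) 0 = fderiv 𝕜 (fderiv 𝕜 f) x v v := by
  have hline (t : 𝕜) : HasDerivAt (fun t : 𝕜 => x + t • v) v t := by
    simpa using ((hasDerivAt_id t).smul_const v).const_add x
  have hlim : Tendsto (fun t : 𝕜 => x + t • v) (𝓝 0) (𝓝 x) := by
    simpa using (hline 0).continuousAt.tendsto
  have hderiv : deriv (fun t : 𝕜 => f (x + t • v)) =ᶠ[𝓝 0] fun t => fderiv 𝕜 f (x + t • v) v := by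
    filter_upwards [hlim.eventually (hf.eventually (by simp))] with t ht
    exact ((ht.differentiableAt (by simp)).hasFDerivAt.comp_hasDerivAt t (hline t)).deriv
  have hdiff : DifferentiableAt 𝕜 (fderiv 𝕜 f) x :=
    (hf.fderiv_right (m := 1) (by norm_num)).differentiableAt (by simp)
  have hsecond : HasDerivAt (fun t : 𝕜 => fderiv 𝕜 f (x + t • v)) (fderiv 𝕜 (fderiv 𝕜 f) x v) 0 :=
    hdiff.hasFDerivAt.comp_hasDerivAt_of_eq 0 (hline 0) (by simp)
  have happly : HasDerivAt (fun t : 𝕜 => fderiv 𝕜 f (x + t • v) v)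
      (fderiv 𝕜 (fderiv 𝕜 f) x v v) 0 :=
    (ContinuousLinearMap.apply 𝕜 F v).hasFDerivAt.comp_hasDerivAt 0 hsecond
  rw [hderiv.deriv_eq, happly.deriv]

section InnerProductSpace

variable {E : Type*} [NormedAddCommGroup E] [InnerProductSpace ℝ E]

section Laplacian

variable [FiniteDimensional ℝ E]

theorem laplacian_eq_sum_fderiv_fderiv {F : Type*} [NormedAddCommGroup F] [NormedSpace ℝ F]
    {ι : Type*} [Fintype ι] (b : OrthonormalBasis ι ℝ E) (f : E → F) (x : E) :
    Δ f x = ∑ i, fderiv ℝ (fderiv ℝ f) x (b i) (b i) := by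
  simp [laplacian_eq_iteratedFDeriv_orthonormalBasis f b, iteratedFDeriv_two_apply]

theorem laplacian_comp_norm_sq {g g' : ℝ → ℝ} {g'' : ℝ} {z : E}
    (hg : ∀ᶠ t in 𝓝 (‖z‖ ^ 2), HasDerivAt g (g' t) t) (hg' : HasDerivAt g' g'' (‖z‖ ^ 2)) :
    Δ (fun w : E => g (‖w‖ ^ 2)) z = 4 * ‖z‖ ^ 2 * g'' + 2 * finrank ℝ E * g' (‖z‖ ^ 2) := by
  have hfirst : fderiv ℝ (fun w : E => g (‖w‖ ^ 2)) =ᶠ[𝓝 z]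
      fun w => (2 * g' (‖w‖ ^ 2)) • innerSL ℝ w := by
    have hcont : Tendsto (fun w : E => ‖w‖ ^ 2) (𝓝 z) (𝓝 (‖z‖ ^ 2)) :=
      (by fun_prop : Continuous fun w : E => ‖w‖ ^ 2).tendsto z
    filter_upwards [hcont.eventually hg] with w hw
    have hD : HasFDerivAt (fun w : E => g (‖w‖ ^ 2)) _ w :=
      hw.comp_hasFDerivAt w (hasStrictFDerivAt_norm_sq w).hasFDerivAt
    rw [hD.fderiv, mul_comm, mul_smul, ← Nat.cast_smul_eq_nsmul ℝ, Nat.cast_ofNat]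
  have hsecond (v : E) : fderiv ℝ (fderiv ℝ fun w : E => g (‖w‖ ^ 2)) z v v =
      4 * g'' * inner ℝ z v ^ 2 + 2 * g' (‖z‖ ^ 2) * ‖v‖ ^ 2 := by
    have hcoef : HasFDerivAt (fun w : E => 2 * g' (‖w‖ ^ 2)) _ z :=
      (hg'.comp_hasFDerivAt z (hasStrictFDerivAt_norm_sq z).hasFDerivAt).const_mul 2
    have hD : HasFDerivAt (fun w : E => (2 * g' (‖w‖ ^ 2)) • innerSL ℝ w) _ z :=
      hcoef.smul (innerSL ℝ : E →L[ℝ] E →L[ℝ] ℝ).hasFDerivAt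
    have hself : (innerSL ℝ : E →L[ℝ] E →L[ℝ] ℝ) v v = ‖v‖ ^ 2 := real_inner_self_eq_norm_sq v
    rw [hfirst.fderiv_eq, hD.fderiv]
    simp only [add_apply, smul_apply, ContinuousLinearMap.smulRight_apply, coe_innerSL_apply,
      nsmul_eq_mul, Nat.cast_ofNat, smul_eq_mul, hself]
    ring
  rw [laplacian_eq_sum_fderiv_fderiv (stdOrthonormalBasis ℝ E)]
  simp only [hsecond, Finset.sum_add_distrib, ← Finset.mul_sum,
    OrthonormalBasis.sum_sq_inner_left, OrthonormalBasis.norm_eq_one]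
  simp only [one_pow, Finset.sum_const, Finset.card_univ, Fintype.card_fin, nsmul_eq_mul, mul_one]
  ring

theorem laplacian_norm_sq (z : E) : Δ (fun w : E => ‖w‖ ^ 2) z = 2 * finrank ℝ E := by
  simpa using laplacian_comp_norm_sq (z := z) (g := id) (g' := fun _ => 1)
    (.of_forall hasDerivAt_id) (hasDerivAt_const _ 1)

theorem laplacian_nonpos_of_isLocalMax {f : E → ℝ} {x : E} (hf : ContDiffAt ℝ 2 f x)
    (hmax : IsLocalMax f x) : Δ f x ≤ 0 := by
  rw [laplacian_eq_sum_fderiv_fderiv (stdOrthonormalBasis ℝ E)]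
  refine Finset.sum_nonpos fun i _ => ?_
  set v := stdOrthonormalBasis ℝ E i
  have hcont : ContinuousAt (fun t : ℝ => x + t • v) 0 := by fun_prop
  have hline : Tendsto (fun t : ℝ => x + t • v) (𝓝 0) (𝓝 x) := by simpa using hcont.tendsto
  rw [← deriv_deriv_comp_add_smul hf]
  refine deriv_deriv_nonpos_of_isLocalMax ?_ (hf.continuousAt.comp_of_eq hcont (by simp))
  filter_upwards [hline.eventually hmax] with t ht
  simpa using ht

theorem le_of_laplacian_pos_of_frontier_le {U : Set E} (hU : IsOpen U)
    (hbdd : Bornology.IsBounded U) {u : E → ℝ} (hcont : ContinuousOn u (closure U))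
    (hdiff : ∀ x ∈ U, ContDiffAt ℝ 2 u x) (hΔ : ∀ x ∈ U, 0 < Δ u x) {c : ℝ}
    (hc : ∀ x ∈ frontier U, u x ≤ c) {x : E} (hx : x ∈ U) : u x ≤ c := by
  obtain ⟨z, hz, hmax⟩ := hbdd.isCompact_closure.exists_isMaxOn ⟨x, subset_closure hx⟩ hcont
  have hzU : z ∉ U := fun hzU => (hΔ z hzU).not_ge <| laplacian_nonpos_of_isLocalMax
    (hdiff z hzU) (hmax.isLocalMax (mem_of_superset (hU.mem_nhds hzU) subset_closure))
  calc u x ≤ u z := hmax (subset_closure hx)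
    _ ≤ c := hc z ⟨hz, by rwa [hU.interior_eq]⟩

theorem le_of_laplacian_nonneg_of_frontier_le [Nontrivial E] {U : Set E} (hU : IsOpen U)
    (hbdd : Bornology.IsBounded U) {u : E → ℝ} (hcont : ContinuousOn u (closure U))
    (hdiff : ∀ x ∈ U, ContDiffAt ℝ 2 u x) (hΔ : ∀ x ∈ U, 0 ≤ Δ u x) {c : ℝ}
    (hc : ∀ x ∈ frontier U, u x ≤ c) {x : E} (hx : x ∈ U) : u x ≤ c := by
  obtain ⟨R, hR⟩ := hbdd.closure.exists_norm_le
  have hperturbed (ε : ℝ) (hε : 0 < ε) : u x ≤ c + ε * R ^ 2 := by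
    have hquad (y : E) : ContDiffAt ℝ 2 (fun y : E => ‖y‖ ^ 2) y := (contDiff_norm_sq ℝ).contDiffAt
    have hquad' (y : E) : ContDiffAt ℝ 2 (ε • fun y : E => ‖y‖ ^ 2) y := (hquad y).const_smul ε
    have hpos : 0 < ε * (2 * finrank ℝ E) := by
      have : 0 < finrank ℝ E := finrank_pos
      positivity
    calc u x ≤ u x + ε * ‖x‖ ^ 2 := le_add_of_nonneg_right (by positivity)
      _ ≤ c + ε * R ^ 2 := by
        refine le_of_laplacian_pos_of_frontier_le (u := u + ε • fun y => ‖y‖ ^ 2) hU hbdd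
          (hcont.add (by fun_prop)) (fun y hy => (hdiff y hy).add (hquad' y)) (fun y hy => ?_)
          (fun y hy => ?_) hx
        · rw [(hdiff y hy).laplacian_add (hquad' y), laplacian_smul ε (hquad y),
            laplacian_norm_sq, smul_eq_mul]
          exact add_pos_of_nonneg_of_pos (hΔ y hy) hpos
        · change u y + ε * ‖y‖ ^ 2 ≤ c + ε * R ^ 2
          gcongr
          · exact hc y hy
          · exact hR y hy.1
  have hlim : Tendsto (fun ε : ℝ => c + ε * R ^ 2) (𝓝[>] 0) (𝓝 c) := by
    have hcont : Continuous fun ε : ℝ => c + ε * R ^ 2 := by fun_prop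
    simpa using (hcont.tendsto 0).mono_left nhdsWithin_le_nhds
  exact ge_of_tendsto hlim (eventually_mem_nhdsWithin.mono hperturbed)

theorem eq_apply_zero_of_harmonicOnNhd_ball_of_radial [Nontrivial E] {u : E → ℝ} {r : ℝ}
    (hu : HarmonicOnNhd u (ball 0 r))
    (hrad : ∀ y ∈ ball 0 r, ∀ z ∈ ball 0 r, ‖y‖ = ‖z‖ → u y = u z) {x : E}
    (hx : x ∈ ball 0 r) : u x = u 0 := by
  rcases eq_or_ne x 0 with rfl | hx0
  · rfl
  have hxr : closedBall (0 : E) ‖x‖ ⊆ ball 0 r :=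
    closedBall_subset_ball (mem_ball_zero_iff.1 hx)
  have hle (f : E → ℝ) (hf : HarmonicOnNhd f (ball 0 r))
      (hfrad : ∀ y : E, ‖y‖ = ‖x‖ → f y = f x) : f 0 ≤ f x := by
    have hcont : ContinuousOn f (closedBall 0 ‖x‖) := fun y hy =>
      (hf y (hxr hy)).1.continuousAt.continuousWithinAt
    have hharm : ∀ y ∈ ball 0 ‖x‖, HarmonicAt f y := fun y hy =>
      hf y (hxr (ball_subset_closedBall hy))
    exact le_of_laplacian_nonneg_of_frontier_le isOpen_ball isBounded_ball
      (hcont.mono closure_ball_subset_closedBall) (fun y hy => (hharm y hy).1)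
      (fun y hy => (hharm y hy).2.self_of_nhds.ge)
      (fun y hy => (hfrad y (mem_sphere_zero_iff_norm.1 (frontier_ball_subset_sphere hy))).le)
      (mem_ball_self (norm_pos_iff.2 hx0))
  have hxrad (y : E) (hy : ‖y‖ = ‖x‖) : u y = u x :=
    hrad y (by rwa [mem_ball_zero_iff, hy, ← mem_ball_zero_iff]) x hx hy
  refine le_antisymm ?_ (hle u hu hxrad)
  simpa using hle (-u) hu.neg fun y hy => congrArg Neg.neg (hxrad y hy)

end Laplacian

section HarmonicConvolution

variable [FiniteDimensional ℝ E] [MeasurableSpace E] [BorelSpace E] {ν : Measure E}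
  [IsFiniteMeasure ν] {F : Type*} [NormedAddCommGroup F] [NormedSpace ℝ F]
  {K U V : Set E} {k : E → F}

set_option maxSynthPendingDepth 3 in
theorem laplacian_integral_comp_sub (hV : IsOpen V) (hk : ContDiffOn ℝ 2 k V)
    (hU : IsOpen U) (hUV : ∀ x ∈ U, ∀ y ∈ K, x - y ∈ V) (hK : IsCompact K)
    (hν : ∀ᵐ y ∂ν, y ∈ K) {x : E} (hx : x ∈ U) :
    Δ (fun z => ∫ y, k (z - y) ∂ν) x = ∫ y, Δ k (x - y) ∂ν := by
  have hk' : ContDiffOn ℝ 1 (fderiv ℝ k) V := hk.fderiv_of_isOpen hV (by norm_num)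
  have hk'' : ContinuousOn (fderiv ℝ (fderiv ℝ k)) V :=
    hk'.continuousOn_fderiv_of_isOpen hV le_rfl
  have hfirst : fderiv ℝ (fun z => ∫ y, k (z - y) ∂ν) =ᶠ[𝓝 x]
      fun z => ∫ y, fderiv ℝ k (z - y) ∂ν := by
    filter_upwards [hU.mem_nhds hx] with z hz
    exact (hasFDerivAt_integral_comp_sub hV (hk.of_le one_le_two) hU hUV hK hν hz).fderiv
  have hD₂ : Integrable (fun y => fderiv ℝ (fderiv ℝ k) (x - y)) ν :=
    integrable_of_continuousOn_of_ae_mem_isCompact (hk''.comp (by fun_prop) (hUV x hx)) hK hν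
  simp only [laplacian_eq_sum_fderiv_fderiv (stdOrthonormalBasis ℝ E)]
  rw [hfirst.fderiv_eq, (hasFDerivAt_integral_comp_sub hV hk' hU hUV hK hν hx).fderiv,
    integral_finsetSum _ fun i _ => (hD₂.apply_continuousLinearMap _).apply_continuousLinearMap _]
  refine Finset.sum_congr rfl fun i _ => ?_
  rw [ContinuousLinearMap.integral_apply hD₂,
    ContinuousLinearMap.integral_apply (hD₂.apply_continuousLinearMap _)]

theorem harmonicOnNhd_integral_comp_sub (hV : IsOpen V)
    (hk : HarmonicOnNhd k V) (hU : IsOpen U) (hUV : ∀ x ∈ U, ∀ y ∈ K, x - y ∈ V)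
    (hK : IsCompact K) (hν : ∀ᵐ y ∂ν, y ∈ K) :
    HarmonicOnNhd (fun x => ∫ y, k (x - y) ∂ν) U := by
  refine fun x hx => ⟨(contDiffOn_two_integral_comp_sub hV hk.contDiffOn hU hUV hK hν).contDiffAt
    (hU.mem_nhds hx), ?_⟩
  filter_upwards [hU.mem_nhds hx] with z hz
  rw [laplacian_integral_comp_sub hV hk.contDiffOn hU hUV hK hν hz]
  refine integral_eq_zero_of_ae ?_
  filter_upwards [hν] with y hy using (hk _ (hUV z hz y hy)).2.self_of_nhds

end HarmonicConvolution

section NewtonianKernel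

theorem norm_inversion_sub_of_norm_eq {r : ℝ} {x y : E} (hr : 0 < r) (hx : x ≠ 0) (hy : ‖y‖ = r) :
    ‖EuclideanGeometry.inversion 0 r x - y‖ = r / ‖x‖ * ‖x - y‖ := by
  have hy0 : y ≠ 0 := norm_pos_iff.1 (hy ▸ hr)
  have h := EuclideanGeometry.dist_inversion_inversion hx hy0 r
  rw [EuclideanGeometry.inversion_of_mem_sphere (mem_sphere_zero_iff_norm.2 hy)] at h
  simp only [dist_eq_norm, sub_zero, hy] at h
  rw [h]
  field_simp

/-- The Newtonian kernel `|z|^(2 - n)` of an `n`-dimensional space, without the normalizing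
constant that turns it into the fundamental solution of the Laplace equation. -/
noncomputable def newtonianKernel (z : E) : ℝ :=
  ‖z‖ ^ ((2 : ℝ) - finrank ℝ E)

theorem newtonianKernel_eq_rpow_norm_sq (z : E) :
    newtonianKernel z = (‖z‖ ^ 2) ^ ((2 - finrank ℝ E : ℝ) / 2) := by
  rw [newtonianKernel, ← Real.rpow_natCast, ← Real.rpow_mul (norm_nonneg z), Nat.cast_ofNat,
    mul_div_cancel₀ _ two_ne_zero]

theorem laplacian_newtonianKernel [FiniteDimensional ℝ E] {z : E} (hz : z ≠ 0) :
    Δ (newtonianKernel (E := E)) z = 0 := by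
  set p : ℝ := (2 - finrank ℝ E) / 2 with hp
  have hpos : 0 < ‖z‖ ^ 2 := by positivity
  have hg : ∀ᶠ t in 𝓝 (‖z‖ ^ 2), HasDerivAt (fun t : ℝ => t ^ p) (p * t ^ (p - 1)) t := by
    filter_upwards [lt_mem_nhds hpos] with t ht using Real.hasDerivAt_rpow_const (.inl ht.ne')
  have hg' : HasDerivAt (fun t : ℝ => p * t ^ (p - 1))
      (p * ((p - 1) * (‖z‖ ^ 2) ^ (p - 1 - 1))) (‖z‖ ^ 2) :=
    (Real.hasDerivAt_rpow_const (.inl hpos.ne')).const_mul p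
  have hpow : (‖z‖ ^ 2) ^ (p - 1) = ‖z‖ ^ 2 * (‖z‖ ^ 2) ^ (p - 1 - 1) := by
    rw [Real.rpow_sub_one hpos.ne' (p - 1), mul_div_cancel₀ _ hpos.ne']
  rw [funext newtonianKernel_eq_rpow_norm_sq, laplacian_comp_norm_sq hg hg', hpow, hp]
  ring

theorem contDiffAt_newtonianKernel {n : ℕ∞ω} {z : E} (hz : z ≠ 0) :
    ContDiffAt ℝ n newtonianKernel z :=
  (contDiffAt_norm ℝ hz).rpow_const_of_ne (norm_ne_zero_iff.2 hz)

theorem harmonicOnNhd_newtonianKernel [FiniteDimensional ℝ E] :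
    HarmonicOnNhd (newtonianKernel (E := E)) {0}ᶜ := fun z hz =>
  ⟨contDiffAt_newtonianKernel hz, by
    filter_upwards [isOpen_compl_singleton.mem_nhds hz] with w hw
    exact laplacian_newtonianKernel hw⟩

end NewtonianKernel

section NewtonianPotential

variable [MeasurableSpace E]

/-- The Newtonian potential of a mass distribution `ν`, with the same normalization as
`newtonianKernel`. -/
noncomputable def newtonianPotential (ν : Measure E) (x : E) : ℝ :=
  ∫ y, newtonianKernel (x - y) ∂ν

variable {ν : Measure E}

theorem newtonianPotential_inversion {r : ℝ} (hr : 0 < r) (hν : ∀ᵐ y ∂ν, ‖y‖ = r) {x : E}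
    (hx : x ≠ 0) : newtonianPotential ν (EuclideanGeometry.inversion 0 r x) =
      (r / ‖x‖) ^ ((2 : ℝ) - finrank ℝ E) * newtonianPotential ν x := by
  rw [newtonianPotential, newtonianPotential, ← integral_const_mul]
  refine integral_congr_ae ?_
  filter_upwards [hν] with y hy
  rw [newtonianKernel, newtonianKernel, norm_inversion_sub_of_norm_eq hr hx hy,
    Real.mul_rpow (by positivity) (norm_nonneg _)]

variable [BorelSpace E]

theorem harmonicOnNhd_newtonianPotential [FiniteDimensional ℝ E] [IsFiniteMeasure ν] {K : Set E}
    (hK : IsCompact K) (hν : ∀ᵐ y ∂ν, y ∈ K) : HarmonicOnNhd (newtonianPotential ν) Kᶜ :=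
  harmonicOnNhd_integral_comp_sub isOpen_compl_singleton harmonicOnNhd_newtonianKernel
    hK.isClosed.isOpen_compl (fun _ hx _ hy => sub_ne_zero.2 fun h => hx (h ▸ hy)) hK hν

theorem newtonianPotential_eq_of_norm_eq [CompleteSpace E]
    (hrot : ∀ R : E ≃ₗᵢ[ℝ] E, MeasurePreserving R ν ν) {x z : E} (h : ‖x‖ = ‖z‖) :
    newtonianPotential ν x = newtonianPotential ν z := by
  set R : E ≃ₗᵢ[ℝ] E := (ℝ ∙ (x - z))ᗮ.reflection
  have hR : R x = z := Submodule.reflection_sub h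
  calc newtonianPotential ν x = ∫ y, newtonianKernel (z - R y) ∂ν := by
        simp only [newtonianPotential, newtonianKernel, ← hR, ← map_sub, R.norm_map]
    _ = newtonianPotential ν z :=
        (hrot R).integral_comp R.toHomeomorph.measurableEmbedding fun y => newtonianKernel (z - y)

theorem newtonianPotential_of_norm_lt [FiniteDimensional ℝ E] [Nontrivial E] [IsFiniteMeasure ν]
    (hrot : ∀ R : E ≃ₗᵢ[ℝ] E, MeasurePreserving R ν ν) {r : ℝ} (hν : ∀ᵐ y ∂ν, ‖y‖ = r) {x : E}
    (hx : ‖x‖ < r) : newtonianPotential ν x = ν.real univ * r ^ ((2 : ℝ) - finrank ℝ E) := by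
  have hν' : ∀ᵐ y ∂ν, y ∈ sphere 0 r := by simpa only [mem_sphere_zero_iff_norm] using hν
  have hharm : HarmonicOnNhd (newtonianPotential ν) (ball 0 r) :=
    (harmonicOnNhd_newtonianPotential (isCompact_sphere 0 r) hν').mono
      sphere_disjoint_ball.subset_compl_left
  rw [eq_apply_zero_of_harmonicOnNhd_ball_of_radial hharm
    (fun _ _ _ _ => newtonianPotential_eq_of_norm_eq hrot) (mem_ball_zero_iff.2 hx)]
  calc newtonianPotential ν 0 = ∫ _, r ^ ((2 : ℝ) - finrank ℝ E) ∂ν := by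
        refine integral_congr_ae ?_
        filter_upwards [hν] with y hy
        rw [newtonianKernel, zero_sub, norm_neg, hy]
    _ = ν.real univ * r ^ ((2 : ℝ) - finrank ℝ E) := by rw [integral_const, smul_eq_mul]

theorem newtonianPotential_of_lt_norm [FiniteDimensional ℝ E] [Nontrivial E] [IsFiniteMeasure ν]
    (hrot : ∀ R : E ≃ₗᵢ[ℝ] E, MeasurePreserving R ν ν) {r : ℝ} (hr : 0 < r)
    (hν : ∀ᵐ y ∂ν, ‖y‖ = r) {x : E} (hx : r < ‖x‖) :
    newtonianPotential ν x = ν.real univ * ‖x‖ ^ ((2 : ℝ) - finrank ℝ E) := by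
  have hx0 : 0 < ‖x‖ := hr.trans hx
  have hinv : ‖EuclideanGeometry.inversion 0 r x‖ < r := by
    rw [← dist_zero_right, EuclideanGeometry.dist_inversion_center, dist_zero_right,
      div_lt_iff₀ hx0, sq]
    gcongr
  have h := newtonianPotential_of_norm_lt hrot hν hinv
  rw [newtonianPotential_inversion hr hν (norm_pos_iff.1 hx0), Real.div_rpow hr.le hx0.le] at h
  have hrp : 0 < r ^ ((2 : ℝ) - finrank ℝ E) := by positivity
  have hxp : 0 < ‖x‖ ^ ((2 : ℝ) - finrank ℝ E) := by positivity
  rw [div_mul_eq_mul_div, div_eq_iff hxp.ne'] at h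
  refine mul_left_cancel₀ hrp.ne' (h.trans ?_)
  ring

end NewtonianPotential

section HausdorffMeasure

section NormedSpace

variable {E : Type*} [NormedAddCommGroup E] [NormedSpace ℝ E] [MeasurableSpace E] [BorelSpace E]

theorem measurePreserving_hausdorffMeasure_restrict_sphere (d r : ℝ) (R : E ≃ₗᵢ[ℝ] E) :
    MeasurePreserving R (μH[d].restrict (sphere 0 r)) (μH[d].restrict (sphere 0 r)) := by
  have hpre : R ⁻¹' sphere (0 : E) r = sphere 0 r := by
    ext y
    simp
  have h := (R.toIsometryEquiv.measurePreserving_hausdorffMeasure d).restrict_preimage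
    (s := sphere 0 r) isClosed_sphere.measurableSet
  rwa [LinearIsometryEquiv.coe_toIsometryEquiv, hpre] at h

theorem hausdorffMeasure_sphere_zero {d : ℝ} (hd : 0 ≤ d) {r : ℝ} (hr : 0 < r) :
    μH[d] (sphere (0 : E) r) = ENNReal.ofReal (r ^ d) * μH[d] (sphere (0 : E) 1) := by
  have hsmul := smul_sphere' hr.ne' (0 : E) 1
  rw [smul_zero, mul_one, Real.norm_of_nonneg hr.le] at hsmul
  rw [← hsmul, Measure.hausdorffMeasure_smul₀ hd hr.ne', ENNReal.smul_def, smul_eq_mul,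
    ← ENNReal.ofReal_rpow_of_nonneg hr.le hd, ENNReal.coe_rpow_of_nonneg _ hd, ← enorm_eq_nnnorm,
    Real.enorm_of_nonneg hr.le]

end NormedSpace

theorem cast_finrank_orthogonal_span_singleton [FiniteDimensional ℝ E] {v : E} (hv : v ≠ 0) :
    (finrank ℝ (ℝ ∙ v)ᗮ : ℝ) = finrank ℝ E - 1 := by
  have h := (ℝ ∙ v).finrank_add_finrank_orthogonal
  rw [finrank_span_singleton hv] at h
  rw [← h]
  push_cast
  ring

theorem hausdorffMeasure_image_ne_top_of_contDiff {G H : Type*} [NormedAddCommGroup G]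
    [NormedSpace ℝ G] [FiniteDimensional ℝ G] [MeasurableSpace G] [BorelSpace G]
    [NormedAddCommGroup H] [NormedSpace ℝ H] [MeasurableSpace H] [BorelSpace H] {f : G → H}
    (hf : ContDiff ℝ 1 f) {s : Set G} (hs : IsCompact s) :
    μH[(finrank ℝ G : ℝ)] (f '' s) ≠ ⊤ := by
  obtain ⟨C, hC⟩ := hf.locallyLipschitz.locallyLipschitzOn.exists_lipschitzOnWith_of_compact hs
  exact ((hC.hausdorffMeasure_image_le (Nat.cast_nonneg _)).trans_lt
    (ENNReal.mul_lt_top (ENNReal.rpow_lt_top_of_nonneg (Nat.cast_nonneg _) ENNReal.coe_ne_top)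
      hs.measure_lt_top)).ne

theorem hemisphere_subset_image_stereoInvFunAux {v : E} (hv : ‖v‖ = 1) :
    {y ∈ sphere (0 : E) 1 | inner ℝ v y ≤ 0} ⊆
      (fun w : (ℝ ∙ v)ᗮ => stereoInvFunAux v (w : E)) '' closedBall 0 2 := by
  rintro y ⟨hy, hvy⟩
  have hne : y ≠ v := by
    rintro rfl
    rw [real_inner_self_eq_norm_sq, hv] at hvy
    norm_num at hvy
  refine ⟨stereoToFun v y, ?_, congrArg Subtype.val (stereo_left_inv hv (x := ⟨y, hy⟩) hne)⟩
  have hcoeff : ‖2 / (1 - inner ℝ v y)‖ ≤ 2 := by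
    rw [Real.norm_of_nonneg (div_nonneg zero_le_two (by linarith))]
    exact div_le_self zero_le_two (by linarith)
  have hproj : ‖(ℝ ∙ v)ᗮ.orthogonalProjectionOnto y‖ ≤ 1 := by
    simpa only [mem_sphere_zero_iff_norm.1 hy] using
      (ℝ ∙ v)ᗮ.norm_orthogonalProjectionOnto_apply_le y
  rw [mem_closedBall_zero_iff, stereoToFun_apply, norm_smul]
  simpa using mul_le_mul hcoeff hproj (norm_nonneg _) zero_le_two

theorem ball_subset_orthogonalProjectionOnto_image_sphere {v : E} (hv : ‖v‖ = 1) :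
    ball 0 1 ⊆ (ℝ ∙ v)ᗮ.orthogonalProjectionOnto '' sphere (0 : E) 1 := by
  intro w hw
  have hw1 : ‖w‖ ^ 2 ≤ 1 := (sq_le_one_iff₀ (norm_nonneg w)).2 (mem_ball_zero_iff.1 hw).le
  have hvw : inner ℝ (w : E) v = 0 := Submodule.mem_orthogonal_singleton_iff_inner_left.1 w.2
  refine ⟨w + √(1 - ‖w‖ ^ 2) • v, ?_, ?_⟩
  · rw [mem_sphere_zero_iff_norm, ← pow_eq_one_iff_of_nonneg (norm_nonneg _) two_ne_zero,
      norm_add_sq_real, inner_smul_right, hvw, norm_smul, hv, Real.norm_eq_abs, mul_one, sq_abs,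
      Real.sq_sqrt (sub_nonneg.2 hw1), Submodule.coe_norm]
    ring
  · rw [map_add, map_smul, Submodule.orthogonalProjectionOnto_mem_subspace_eq_self,
      Submodule.orthogonalProjectionOnto_orthogonalComplement_singleton_eq_zero, smul_zero,
      add_zero]

variable [MeasurableSpace E] [BorelSpace E] [FiniteDimensional ℝ E]

theorem hausdorffMeasure_hemisphere_ne_top {v : E} (hv : ‖v‖ = 1) :
    μH[(finrank ℝ E : ℝ) - 1] {y ∈ sphere (0 : E) 1 | inner ℝ v y ≤ 0} ≠ ⊤ := by
  rw [← cast_finrank_orthogonal_span_singleton (norm_ne_zero_iff.1 (hv ▸ one_ne_zero))]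
  exact ne_top_of_le_ne_top
    (hausdorffMeasure_image_ne_top_of_contDiff
      (contDiff_stereoInvFunAux.comp (ℝ ∙ v)ᗮ.subtypeL.contDiff) (isCompact_closedBall 0 2))
    (measure_mono (hemisphere_subset_image_stereoInvFunAux hv))

theorem hausdorffMeasure_unitSphere_ne_top [Nontrivial E] :
    μH[(finrank ℝ E : ℝ) - 1] (sphere (0 : E) 1) ≠ ⊤ := by
  obtain ⟨v, hv⟩ := exists_norm_eq E zero_le_one
  have hcover : sphere (0 : E) 1 ⊆
      {y ∈ sphere 0 1 | inner ℝ v y ≤ 0} ∪ {y ∈ sphere 0 1 | inner ℝ (-v) y ≤ 0} := fun y hy =>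
    (le_total (inner ℝ v y) 0).imp (⟨hy, ·⟩) fun h => ⟨hy, by simpa using h⟩
  exact measure_ne_top_of_subset hcover (measure_union_ne_top
    (hausdorffMeasure_hemisphere_ne_top hv)
    (hausdorffMeasure_hemisphere_ne_top ((norm_neg v).trans hv)))

theorem hausdorffMeasure_unitSphere_ne_zero [Nontrivial E] :
    μH[(finrank ℝ E : ℝ) - 1] (sphere (0 : E) 1) ≠ 0 := by
  obtain ⟨v, hv⟩ := exists_norm_eq E zero_le_one
  rw [← cast_finrank_orthogonal_span_singleton (norm_ne_zero_iff.1 (hv ▸ one_ne_zero))]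
  refine ne_of_gt ?_
  calc 0 < μH[(finrank ℝ (ℝ ∙ v)ᗮ : ℝ)] (ball (0 : (ℝ ∙ v)ᗮ) 1) := measure_ball_pos _ 0 one_pos
    _ ≤ μH[(finrank ℝ (ℝ ∙ v)ᗮ : ℝ)] ((ℝ ∙ v)ᗮ.orthogonalProjectionOnto '' sphere (0 : E) 1) :=
      measure_mono (ball_subset_orthogonalProjectionOnto_image_sphere hv)
    _ ≤ μH[(finrank ℝ (ℝ ∙ v)ᗮ : ℝ)] (sphere (0 : E) 1) :=
      hausdorffMeasure_orthogonalProjectionOnto_le _ _ _ (Nat.cast_nonneg _)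

theorem hausdorffMeasure_sphere_zero_finrank [Nontrivial E] {r : ℝ} (hr : 0 < r) :
    μH[(finrank ℝ E : ℝ) - 1] (sphere (0 : E) r) =
      ENNReal.ofReal (r ^ (finrank ℝ E - 1)) * μH[(finrank ℝ E : ℝ) - 1] (sphere (0 : E) 1) := by
  rw [← Nat.cast_pred finrank_pos, hausdorffMeasure_sphere_zero (Nat.cast_nonneg _) hr,
    Real.rpow_natCast]

end HausdorffMeasure

theorem statement_8_general [FiniteDimensional ℝ E] [Nontrivial E] [MeasurableSpace E]
    [BorelSpace E] {r : ℝ} (hr : 0 < r) {x : E} (hx : ‖x‖ ≠ r) :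
    (1 / ((μH[(finrank ℝ E : ℝ) - 1] (sphere (0 : E) 1)).toReal * r ^ (finrank ℝ E - 1))) *
        ∫ y in sphere (0 : E) r, ‖x - y‖ ^ ((2 : ℝ) - finrank ℝ E) ∂μH[(finrank ℝ E : ℝ) - 1] =
      if r < ‖x‖ then ‖x‖ ^ ((2 : ℝ) - finrank ℝ E) else r ^ ((2 : ℝ) - finrank ℝ E) := by
  set σ : Measure E := μH[(finrank ℝ E : ℝ) - 1]
  set ν : Measure E := σ.restrict (sphere 0 r)
  have hunit : (σ (sphere 0 1)).toReal ≠ 0 := ENNReal.toReal_ne_zero.2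
    ⟨hausdorffMeasure_unitSphere_ne_zero, hausdorffMeasure_unitSphere_ne_top⟩
  have hν : ν univ = ENNReal.ofReal (r ^ (finrank ℝ E - 1)) * σ (sphere 0 1) := by
    rw [Measure.restrict_apply_univ, hausdorffMeasure_sphere_zero_finrank hr]
  have : IsFiniteMeasure ν := ⟨hν ▸
    ENNReal.mul_lt_top ENNReal.ofReal_lt_top hausdorffMeasure_unitSphere_ne_top.lt_top⟩
  have hmass : ν.real univ = (σ (sphere 0 1)).toReal * r ^ (finrank ℝ E - 1) := by
    rw [measureReal_def, hν, ENNReal.toReal_mul, ENNReal.toReal_ofReal (by positivity), mul_comm]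
  have hmass0 : ν.real univ ≠ 0 := hmass ▸ mul_ne_zero hunit (by positivity)
  have hsupp : ∀ᵐ y ∂ν, ‖y‖ = r := by
    filter_upwards [ae_restrict_mem isClosed_sphere.measurableSet] with y hy
    exact mem_sphere_zero_iff_norm.1 hy
  have hrot (R : E ≃ₗᵢ[ℝ] E) : MeasurePreserving R ν ν :=
    measurePreserving_hausdorffMeasure_restrict_sphere _ r R
  rw [← hmass]
  change 1 / ν.real univ * newtonianPotential ν x = _
  split_ifs with h
  · rw [newtonianPotential_of_lt_norm hrot hr hsupp h, one_div, inv_mul_cancel_left₀ hmass0]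
  · rw [newtonianPotential_of_norm_lt hrot hsupp (lt_of_le_of_ne (not_lt.1 h) hx), one_div,
      inv_mul_cancel_left₀ hmass0]

end InnerProductSpace

/-- Lemma 3.6: the average of the Newtonian kernel over a sphere. -/
theorem statement_8 {N : ℕ} (hN : 3 ≤ N) (r : ℝ) (hr : 0 < r)
    (x : EuclideanSpace ℝ (Fin N)) (hx : ‖x‖ ≠ r) :
    (1 / ((μH[(N:ℝ) - 1] (sphere (0:EuclideanSpace ℝ (Fin N)) 1)).toReal * r ^ (N - 1))) *
        ∫ y in sphere (0:EuclideanSpace ℝ (Fin N)) r, ‖x - y‖ ^ ((2:ℝ) - N) ∂μH[(N:ℝ) - 1] =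
      if r < ‖x‖ then ‖x‖ ^ ((2:ℝ) - N) else r ^ ((2:ℝ) - N) := by
  have : Nonempty (Fin N) := ⟨⟨0, by lia⟩⟩
  simpa only [finrank_euclideanSpace_fin] using statement_8_general hr hx
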